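/- arXiv:2505.00486 — 2 statements merged into one kernel-verified Lean document; each statement's English description precedes it below -/
import Mathlib

section
/- Let k, n ≥ 1 and let T : Fin ℓ → ℤ be a sequence with 1 ≤ T i ≤ k + n − 1 for every i. Then the number of nonempty subsets S ⊆ Fin ℓ such that n divides ∑_{i∈S} T i and ∑_{i∈S} T i ≥ ⌈k/n⌉·n is at least 2^(ℓ − ⌈k/n⌉·n + 1) − 1, where the exponent is interpreted via truncated (natural-number) subtraction. -/
/-!
Write `M = m * n` with `m = ⌈k / n⌉`; the bound is trivial unless `M ≤ ℓ`. Any `n` elements of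
`ℤ/n` contain a nonempty subsequence with sum zero, so `m - 1` disjoint ones can be removed
greedily from `T`. Their union `A` has at most `(m - 1) * n` terms, and as the terms are positive
integers its sum is at least `(m - 1) * n`. By Olson's lower bound, applied to the remaining
terms, at least `2 ^ (ℓ + 1 - M) - 1` zero-sum subsequences properly contain `A`; each of them
exceeds `A` by a positive multiple of `n`, so its sum is at least `M`.

Olson's bound is proved by induction on the length: if `W` is a zero-sum set and `a ∈ W`, then
`S ↦ S ∆ W` turns the zero-sum sets containing `a` into those avoiding `a` for the sequence in
which the terms of `W` have changed sign, and both families are counted by induction.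
-/

open Finset symmDiff

section ZeroSums

variable {ι M : Type*} [AddCommMonoid M] [DecidableEq M] {f : ι → M} {s S A : Finset ι}

/-- The zero-sum subsequences of the sequence `f` restricted to `s`, as index sets. The empty
one is included, so that the zero-sum supersets of `A` correspond to the zero-sum
subsequences outside `A`. -/
def zeroSums (f : ι → M) (s : Finset ι) : Finset (Finset ι) :=
  {S ∈ s.powerset | ∑ i ∈ S, f i = 0}

lemma mem_zeroSums : S ∈ zeroSums f s ↔ S ⊆ s ∧ ∑ i ∈ S, f i = 0 := by
  simp only [zeroSums, mem_filter, mem_powerset]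

lemma empty_mem_zeroSums (f : ι → M) (s : Finset ι) : ∅ ∈ zeroSums f s := by
  simp [mem_zeroSums]

lemma union_mem_zeroSums [DecidableEq ι] (hA : A ∈ zeroSums f s) (hS : S ∈ zeroSums f (s \ A)) :
    A ∪ S ∈ zeroSums f s := by
  rw [mem_zeroSums] at *
  have hdisj : Disjoint A S := disjoint_sdiff.mono_right hS.1
  exact ⟨union_subset hA.1 (hS.1.trans sdiff_subset),
    by rw [sum_union hdisj, hA.2, hS.2, add_zero]⟩

end ZeroSums

lemma sum_symmDiff_eq_sum_piecewise_neg_add {ι G : Type*} [DecidableEq ι] [AddCommGroup G]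
    (f : ι → G) (S W : Finset ι) :
    ∑ i ∈ S ∆ W, f i = ∑ i ∈ S, W.piecewise (-f) f i + ∑ i ∈ W, f i := by
  rw [symmDiff_def, sup_eq_union, sum_union disjoint_sdiff_sdiff, sum_piecewise,
    ← sum_inter_add_sum_sdiff W S f, inter_comm W S]
  simp only [Pi.neg_apply, sum_neg_distrib]
  abel

section Counting

variable {ι G : Type*} [DecidableEq ι] [AddCommGroup G] [DecidableEq G]
  {f : ι → G} {s S W A : Finset ι} {a : ι}

lemma sdiff_mem_zeroSums (hA : A ∈ zeroSums f s) (hS : S ∈ zeroSums f s) (hAS : A ⊆ S) :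
    S \ A ∈ zeroSums f (s \ A) := by
  rw [mem_zeroSums] at *
  exact ⟨sdiff_subset_sdiff hS.1 le_rfl, by rw [sum_sdiff_eq_sub hAS, hA.2, hS.2, sub_zero]⟩

lemma card_filter_subset_zeroSums (hA : A ∈ zeroSums f s) :
    #{S ∈ zeroSums f s | A ⊆ S} = #(zeroSums f (s \ A)) := by
  refine card_nbij' (· \ A) (A ∪ ·) ?_ ?_ ?_ ?_
  · intro S hS
    obtain ⟨hS, hAS⟩ := mem_filter.1 hS
    exact sdiff_mem_zeroSums hA hS hAS
  · intro S hS
    exact mem_filter.2 ⟨union_mem_zeroSums hA hS, subset_union_left⟩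
  · intro S hS
    exact union_sdiff_of_subset (mem_filter.1 hS).2
  · intro S hS
    exact union_sdiff_cancel_left (disjoint_sdiff.mono_right (mem_zeroSums.1 hS).1)

lemma card_filter_ssubset_zeroSums_add_one (hA : A ∈ zeroSums f s) :
    #{S ∈ zeroSums f s | A ⊂ S} + 1 = #(zeroSums f (s \ A)) := by
  have hinsert : {S ∈ zeroSums f s | A ⊆ S} = insert A {S ∈ zeroSums f s | A ⊂ S} := by
    ext S
    simp only [mem_filter, mem_insert, subset_iff_ssubset_or_eq]
    grind
  rw [← card_filter_subset_zeroSums hA, hinsert, card_insert_of_notMem (by simp)]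

lemma symmDiff_mem_zeroSums_iff (hW : W ∈ zeroSums f s) :
    S ∆ W ∈ zeroSums f s ↔ S ∈ zeroSums (W.piecewise (-f) f) s := by
  obtain ⟨hWs, hW0⟩ := mem_zeroSums.1 hW
  have hsubset : S ∆ W ⊆ s ↔ S ⊆ s := by
    simp only [subset_iff, mem_symmDiff]
    grind
  rw [mem_zeroSums, mem_zeroSums, hsubset, sum_symmDiff_eq_sum_piecewise_neg_add, hW0, add_zero]

lemma filter_notMem_zeroSums (f : ι → G) (s : Finset ι) (a : ι) :
    {S ∈ zeroSums f s | a ∉ S} = zeroSums f (s.erase a) := by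
  ext S
  simp only [mem_filter, mem_zeroSums, subset_erase]
  tauto

lemma card_filter_mem_zeroSums (hW : W ∈ zeroSums f s) (ha : a ∈ W) :
    #{S ∈ zeroSums f s | a ∈ S} = #(zeroSums (W.piecewise (-f) f) (s.erase a)) := by
  have hmem (S : Finset ι) : a ∈ S ∆ W ↔ a ∉ S := by simp [mem_symmDiff, ha]
  rw [← filter_notMem_zeroSums]
  refine card_nbij' (· ∆ W) (· ∆ W) ?_ ?_ (fun S _ ↦ symmDiff_symmDiff_cancel_right W S)
    (fun S _ ↦ symmDiff_symmDiff_cancel_right W S)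
  · intro S hS
    obtain ⟨hS, haS⟩ := mem_filter.1 hS
    refine mem_filter.2 ⟨(symmDiff_mem_zeroSums_iff hW).1 ?_, by simpa only [hmem, not_not]⟩
    rwa [symmDiff_symmDiff_cancel_right]
  · intro S hS
    obtain ⟨hS, haS⟩ := mem_filter.1 hS
    exact mem_filter.2 ⟨(symmDiff_mem_zeroSums_iff hW).2 hS, (hmem S).2 haS⟩

lemma card_zeroSums_eq_add (hW : W ∈ zeroSums f s) (ha : a ∈ W) :
    #(zeroSums f s) =
      #(zeroSums (W.piecewise (-f) f) (s.erase a)) + #(zeroSums f (s.erase a)) := by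
  rw [← card_filter_mem_zeroSums hW ha, ← filter_notMem_zeroSums,
    card_filter_add_card_filter_not]

end Counting

/-- `d` is an upper bound for the Davenport constant of `M`: every sequence of `d` elements of `M`
has a nonempty zero-sum subsequence. -/
def IsDavenportBound (M : Type*) [AddCommMonoid M] (d : ℕ) : Prop :=
  ∀ x : Fin d → M, ∃ t : Finset (Fin d), t.Nonempty ∧ ∑ i ∈ t, x i = 0

lemma isDavenportBound_card (G : Type*) [AddCommGroup G] [Finite G] :
    IsDavenportBound G (Nat.card G) := by
  intro x
  -- Two of the `|G| + 1` initial sums coincide; the terms between them then have sum zero.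
  have := Fintype.ofFinite G
  let initial (b : Fin (Nat.card G + 1)) : Finset (Fin (Nat.card G)) := {i | i.castSucc < b}
  obtain ⟨a, b, hab, hsum⟩ : ∃ a b, a < b ∧ ∑ i ∈ initial a, x i = ∑ i ∈ initial b, x i := by
    obtain ⟨a, b, hne, hsum⟩ := Fintype.exists_ne_map_eq_of_card_lt
      (fun b ↦ ∑ i ∈ initial b, x i) (by simp)
    rcases hne.lt_or_gt with h | h
    exacts [⟨a, b, h, hsum⟩, ⟨b, a, h, hsum.symm⟩]
  have hsubset : initial a ⊆ initial b := monotone_filter_right _ fun i _ hi ↦ hi.trans hab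
  refine ⟨initial b \ initial a, ⟨a.castPred (hab.trans_le b.le_last).ne, ?_⟩, ?_⟩
  · simp [initial, hab]
  · rw [sum_sdiff_eq_sub hsubset, hsum, sub_self]

lemma isDavenportBound_zmod (n : ℕ) [NeZero n] : IsDavenportBound (ZMod n) n := by
  simpa only [Nat.card_zmod] using isDavenportBound_card (ZMod n)

namespace IsDavenportBound

variable {ι : Type*} {d : ℕ}

lemma exists_mem_zeroSums {M : Type*} [AddCommMonoid M] [DecidableEq M] (h : IsDavenportBound M d)
    (f : ι → M) {s : Finset ι} (hs : d ≤ #s) : ∃ W ∈ zeroSums f s, W.Nonempty ∧ #W ≤ d := by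
  obtain ⟨u, hus, hud⟩ := exists_subset_card_eq hs
  let e : Fin d ↪ ι := (u.equivFinOfCardEq hud).symm.toEmbedding.trans (.subtype _)
  obtain ⟨t, htne, ht0⟩ := h (f ∘ e)
  refine ⟨t.map e, mem_zeroSums.2 ⟨?_, by rwa [sum_map]⟩, htne.map, ?_⟩
  · intro i hi
    obtain ⟨j, -, rfl⟩ := mem_map.1 hi
    exact hus ((u.equivFinOfCardEq hud).symm j).2
  · simpa only [card_map, Fintype.card_fin] using t.card_le_univ

theorem two_pow_le_card_zeroSums {G : Type*} [AddCommGroup G] [DecidableEq G]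
    (h : IsDavenportBound G d) (f : ι → G) (s : Finset ι) : 2 ^ (#s + 1 - d) ≤ #(zeroSums f s) := by
  classical
  induction s using Finset.strongInduction generalizing f with
  | H s ih =>
    rcases lt_or_ge #s d with hlt | hge
    · rw [Nat.sub_eq_zero_of_le hlt, pow_zero]
      exact card_pos.2 ⟨∅, empty_mem_zeroSums f s⟩
    obtain ⟨W, hW, ⟨a, haW⟩, -⟩ := h.exists_mem_zeroSums f hge
    have has : a ∈ s := (mem_zeroSums.1 hW).1 haW
    calc 2 ^ (#s + 1 - d) = 2 ^ (#(s.erase a) + 1 - d) + 2 ^ (#(s.erase a) + 1 - d) := by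
          rw [card_erase_add_one has, Nat.sub_add_comm hge, pow_succ, mul_two]
      _ ≤ #(zeroSums (W.piecewise (-f) f) (s.erase a)) + #(zeroSums f (s.erase a)) :=
          add_le_add (ih _ (erase_ssubset has) _) (ih _ (erase_ssubset has) _)
      _ = #(zeroSums f s) := (card_zeroSums_eq_add hW haW).symm

end IsDavenportBound

section PositiveIntegers

variable {ι : Type*} {n : ℕ} {T : ι → ℤ} {s S : Finset ι}

lemma mem_zeroSums_intCast :
    S ∈ zeroSums (fun i ↦ (T i : ZMod n)) s ↔ S ⊆ s ∧ (n : ℤ) ∣ ∑ i ∈ S, T i := by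
  rw [mem_zeroSums, ← Int.cast_sum, ZMod.intCast_zmod_eq_zero_iff_dvd]

lemma le_sum_of_mem_zeroSums (hT : ∀ i ∈ s, 0 < T i)
    (hS : S ∈ zeroSums (fun i ↦ (T i : ZMod n)) s) (hne : S.Nonempty) :
    (n : ℤ) ≤ ∑ i ∈ S, T i := by
  obtain ⟨hSs, hdvd⟩ := mem_zeroSums_intCast.1 hS
  exact Int.le_of_dvd (sum_pos (fun i hi ↦ hT i (hSs hi)) hne) hdvd

lemma exists_mem_zeroSums_mul_le_sum [NeZero n] (hT : ∀ i ∈ s, 0 < T i) {m : ℕ}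
    (hm : m * n ≤ #s) : ∃ A ∈ zeroSums (fun i ↦ (T i : ZMod n)) s,
      #A ≤ m * n ∧ (m * n : ℤ) ≤ ∑ i ∈ A, T i := by
  classical
  induction m with
  | zero => exact ⟨∅, empty_mem_zeroSums _ _, by simp⟩
  | succ m ih =>
    rw [Nat.succ_mul] at hm
    obtain ⟨A, hA, hAcard, hAsum⟩ := ih (by omega)
    have hcard := card_sdiff_add_card_eq_card (mem_zeroSums.1 hA).1
    obtain ⟨W, hW, hWne, hWcard⟩ :=
      (isDavenportBound_zmod n).exists_mem_zeroSums (fun i ↦ (T i : ZMod n)) (s := s \ A) (by omega)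
    have hdisj : Disjoint A W := disjoint_sdiff.mono_right (mem_zeroSums.1 hW).1
    have hWsum : (n : ℤ) ≤ ∑ i ∈ W, T i :=
      le_sum_of_mem_zeroSums (fun i hi ↦ hT i (sdiff_subset hi)) hW hWne
    refine ⟨A ∪ W, union_mem_zeroSums hA hW, ?_, ?_⟩
    · rw [card_union_of_disjoint hdisj, Nat.succ_mul]
      exact add_le_add hAcard hWcard
    · rw [sum_union hdisj, Nat.cast_succ, add_one_mul]
      exact add_le_add hAsum hWsum

lemma add_le_sum_of_ssubset_of_mem_zeroSums {A : Finset ι} (hT : ∀ i ∈ s, 0 < T i)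
    (hA : A ∈ zeroSums (fun i ↦ (T i : ZMod n)) s) (hS : S ∈ zeroSums (fun i ↦ (T i : ZMod n)) s)
    (hAS : A ⊂ S) : ∑ i ∈ A, T i + n ≤ ∑ i ∈ S, T i := by
  classical
  have hsdiff : (n : ℤ) ≤ ∑ i ∈ S \ A, T i :=
    le_sum_of_mem_zeroSums (fun i hi ↦ hT i (sdiff_subset hi))
      (sdiff_mem_zeroSums hA hS hAS.subset) (sdiff_nonempty.2 hAS.not_subset)
  rw [← sum_sdiff hAS.subset]
  linarith

end PositiveIntegers

theorem stmt7_general {ι : Type*} [Fintype ι] {m n : ℕ} (hm : 1 ≤ m) (hn : 1 ≤ n) (T : ι → ℤ)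
    (hT : ∀ i, 0 < T i) :
    2 ^ (Fintype.card ι + 1 - m * n) - 1 ≤
      Nat.card {S : Finset ι // S.Nonempty ∧ (n : ℤ) ∣ ∑ i ∈ S, T i ∧
        ((m * n : ℕ) : ℤ) ≤ ∑ i ∈ S, T i} := by
  classical
  have : NeZero n := ⟨by omega⟩
  have hT' : ∀ i ∈ univ, 0 < T i := fun i _ ↦ hT i
  obtain ⟨m, rfl⟩ := Nat.exists_eq_add_of_le' hm
  rw [Nat.succ_mul]
  rcases lt_or_ge (Fintype.card ι) (m * n + n) with hlt | hge
  · simp [Nat.sub_eq_zero_of_le (Nat.succ_le_of_lt hlt)]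
  obtain ⟨A, hA, hAcard, hAsum⟩ :=
    exists_mem_zeroSums_mul_le_sum hT' (m := m) (n := n) (by rw [card_univ]; omega)
  have holson :=
    (isDavenportBound_zmod n).two_pow_le_card_zeroSums (fun i ↦ (T i : ZMod n)) (univ \ A)
  rw [← card_filter_ssubset_zeroSums_add_one hA, card_univ_sdiff] at holson
  rw [Nat.card_eq_fintype_card, Fintype.card_subtype, Nat.sub_le_iff_le_add]
  calc 2 ^ (Fintype.card ι + 1 - (m * n + n)) ≤ 2 ^ (Fintype.card ι - #A + 1 - n) :=
        Nat.pow_le_pow_right two_pos (by omega)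
    _ ≤ #{S ∈ zeroSums (fun i ↦ (T i : ZMod n)) univ | A ⊂ S} + 1 := holson
    _ ≤ _ := by
        gcongr
        intro S hS
        obtain ⟨hS, hAS⟩ := mem_filter.1 hS
        have hsum := add_le_sum_of_ssubset_of_mem_zeroSums hT' hA hS hAS
        refine mem_filter.2 ⟨mem_univ S, empty_ssubset.1 ((empty_subset A).trans_ssubset hAS),
          (mem_zeroSums_intCast.1 hS).2, ?_⟩
        push_cast
        linarith

theorem stmt7 {k n ℓ : ℕ} (hk : 1 ≤ k) (hn : 1 ≤ n) (T : Fin ℓ → ℤ)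
    (hT : ∀ i, 1 ≤ T i ∧ T i ≤ (k : ℤ) + n - 1) :
    2 ^ (ℓ + 1 - (k + n - 1) / n * n) - 1 ≤
      Nat.card {S : Finset (Fin ℓ) // S.Nonempty ∧ (n : ℤ) ∣ ∑ i ∈ S, T i ∧
        (((k + n - 1) / n * n : ℕ) : ℤ) ≤ ∑ i ∈ S, T i} := by
  have hm : 1 ≤ (k + n - 1) / n := (Nat.one_le_div_iff hn).2 (by omega)
  simpa only [Fintype.card_fin] using stmt7_general hm hn T fun i ↦ (hT i).1
end

section
/- Let n be a positive integer with n = 6 or n ≥ 8. Then: (a) every zero-sum free sequence T : Fin ℓ → ZMod n with ℓ ≥ ⌊n/2⌋ + 1 is signed g-smooth for some g ∈ ZMod n of additive order n; and (b) there exists a zero-sum free sequence T : Fin ⌊n/2⌋ → ZMod n that is not signed g-smooth for any g ∈ ZMod n of additive order n. Equivalently, the invariant Sgn(ZMod n), defined as the least ℓ₀ such that every zero-sum free sequence of length at least ℓ₀ over ZMod n is signed g-smooth for some g of additive order n, equals ⌈(n+1)/2⌉. -/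
/-!
Part (a) is the Savchev–Chen structure theorem, and no signs are needed. Write `Σ(s)` for the set
of all subsequence sums of `s`, the empty one included. In any abelian group a zero-sum free `s`
with `|Σ(s)| < 2|s|` consists of multiples `m • g` of one element `g` with `1`-smooth `m`, by
induction on `|s|`.

* If some `s ∖ a` satisfies the same bound, then `Σ(s ∖ a) = {0, g, …, M • g}` with `M ≥ |s| - 1`.
  Either `a = x • g` for some `1 ≤ x ≤ M`, which extends the representation to `s`, or `Σ(s ∖ a)`
  and `a + Σ(s ∖ a)` are disjoint and `|Σ(s)| ≥ 2(M + 1) ≥ 2|s|`.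
* Otherwise `|Σ(s ∖ a)| ≥ |Σ(s)| - 1` for every `a`. The sum `σ` of `s` is never in `Σ(s ∖ a)`, so
  `Σ(s ∖ a) = D := Σ(s) ∖ {σ}` for every `a`. Since `D = (σ - a) - D`, a difference `h = a - b` of
  terms is a period of `D`, hence of `Σ(s) = D ∪ (a + D)`, hence of `{σ}`. So all terms are equal.

If `ℓ > n / 2`, then `|Σ| ≤ n < 2ℓ`, and the order of `g` is a divisor of `n` exceeding `n / 2`.

For part (b) put `k = ⌊n / 2⌋` and take `(k, -(k - 1), -(k - 1), 1, …, 1)`. Some coefficient of a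
signed smooth representation is `1`, so up to sign `g` is one of the terms `1`, `k`, `k - 1`. Then
the coefficients sum to at least `4k - 5`, `2k + 1`, `3k - 3` respectively, that is, to at least
`n`.
-/

/-- A nonempty sequence of positive integers is `1`-smooth if the set of sums of its
nonempty subsequences equals the integer interval `[1, total sum]`. -/
def IsOneSmooth {ℓ : ℕ} (T : Fin ℓ → ℤ) : Prop :=
  {s : ℤ | ∃ S : Finset (Fin ℓ), S.Nonempty ∧ ∑ i ∈ S, T i = s} = Set.Icc 1 (∑ i, T i)

/-- A sequence over `ZMod n` is zero-sum free if no nonempty subsequence sums to `0`. -/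
def ZeroSumFree {n ℓ : ℕ} (T : Fin ℓ → ZMod n) : Prop :=
  ∀ S : Finset (Fin ℓ), S.Nonempty → ∑ i ∈ S, T i ≠ 0

/-- A sequence over `ZMod n` is `g`-smooth if its terms are `mᵢ • g` for positive
integers `mᵢ` with `∑ mᵢ < n` such that the integer sequence `(mᵢ)` is `1`-smooth. -/
def IsGSmooth {n ℓ : ℕ} (g : ZMod n) (T : Fin ℓ → ZMod n) : Prop :=
  ∃ m : Fin ℓ → ℤ, (∀ i, 1 ≤ m i) ∧ (∀ i, T i = m i • g) ∧
    (∑ i, m i) < (n : ℤ) ∧ IsOneSmooth m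

/-- A sequence over `ZMod n` is signed `g`-smooth if after multiplying each term by a
sign `±1` it becomes `g`-smooth. -/
def IsSignedGSmooth {n ℓ : ℕ} (g : ZMod n) (T : Fin ℓ → ZMod n) : Prop :=
  ∃ ε : Fin ℓ → ℤ, (∀ i, ε i = 1 ∨ ε i = -1) ∧ IsGSmooth g (fun i => ε i • T i)

section SubsequenceSums

variable {ι M N G : Type*}

/-- The set of sums of all subsequences of `(f i)_{i ∈ s}`, including the empty one. -/
def subsetSums [AddCommMonoid M] [DecidableEq M] (f : ι → M) (s : Finset ι) : Finset M :=
  s.powerset.image fun t => ∑ i ∈ t, f i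

/-- Zero-sum freeness of the subsequence `(f i)_{i ∈ s}`, for sequences in any additive monoid. -/
def ZeroSumFreeOn [AddCommMonoid M] (f : ι → M) (s : Finset ι) : Prop :=
  ∀ t ⊆ s, t.Nonempty → ∑ i ∈ t, f i ≠ 0

section AddCommMonoid

variable [AddCommMonoid M] [DecidableEq M] {f : ι → M} {s t : Finset ι}

lemma mem_subsetSums {x : M} : x ∈ subsetSums f s ↔ ∃ t ⊆ s, ∑ i ∈ t, f i = x := by
  simp [subsetSums]

lemma sum_mem_subsetSums (h : t ⊆ s) : ∑ i ∈ t, f i ∈ subsetSums f s :=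
  mem_subsetSums.2 ⟨t, h, rfl⟩

lemma subsetSums_mono (h : s ⊆ t) : subsetSums f s ⊆ subsetSums f t :=
  Finset.image_subset_image (Finset.powerset_mono.2 h)

lemma subsetSums_congr {f' : ι → M} (h : ∀ i ∈ s, f i = f' i) :
    subsetSums f s = subsetSums f' s :=
  Finset.image_congr fun _ ht =>
    Finset.sum_congr rfl fun i hi => h i (Finset.mem_powerset.1 ht hi)

lemma subsetSums_map [AddCommMonoid N] [DecidableEq N] (φ : M →+ N) (f : ι → M) (s : Finset ι) :
    subsetSums (fun i => φ (f i)) s = (subsetSums f s).image φ := by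
  simp only [subsetSums, Finset.image_image, Function.comp_def, map_sum]

lemma subsetSums_eq_erase_union [DecidableEq ι] {a : ι} (ha : a ∈ s) :
    subsetSums f s = subsetSums f (s.erase a) ∪ (subsetSums f (s.erase a)).image (f a + ·) := by
  conv_lhs => rw [subsetSums, ← Finset.insert_erase ha, Finset.powerset_insert,
    Finset.image_union, Finset.image_image]
  rw [subsetSums, Finset.image_image]
  congr 1
  refine Finset.image_congr fun t ht => Finset.sum_insert fun hat => ?_
  exact Finset.notMem_erase a s (Finset.mem_powerset.1 ht hat)

omit [DecidableEq M] in
lemma ZeroSumFreeOn.mono (hs : ZeroSumFreeOn f s) (h : t ⊆ s) : ZeroSumFreeOn f t :=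
  fun u hu => hs u (hu.trans h)

lemma ZeroSumFreeOn.add_ne_zero [DecidableEq ι] (hs : ZeroSumFreeOn f s) {a : ι} (ha : a ∈ s)
    {x : M} (hx : x ∈ subsetSums f (s.erase a)) : f a + x ≠ 0 := by
  obtain ⟨t, ht, rfl⟩ := mem_subsetSums.1 hx
  rw [← Finset.sum_insert fun hat => Finset.notMem_erase a s (ht hat)]
  exact hs _ (Finset.insert_subset ha (ht.trans (Finset.erase_subset a s)))
    (Finset.insert_nonempty a t)

end AddCommMonoid

section AddCommGroup

variable [AddCommGroup G] [DecidableEq G] {f : ι → G} {s : Finset ι}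

lemma sum_sub_mem_subsetSums {x : G} (hx : x ∈ subsetSums f s) :
    ∑ i ∈ s, f i - x ∈ subsetSums f s := by
  classical
  obtain ⟨t, ht, rfl⟩ := mem_subsetSums.1 hx
  rw [← Finset.sum_sdiff_eq_sub ht]
  exact sum_mem_subsetSums Finset.sdiff_subset

variable [DecidableEq ι]

lemma ZeroSumFreeOn.sum_notMem_subsetSums_erase (hs : ZeroSumFreeOn f s) {a : ι} (ha : a ∈ s) :
    ∑ i ∈ s, f i ∉ subsetSums f (s.erase a) := fun h =>
  hs.add_ne_zero ha (sum_sub_mem_subsetSums h) (by rw [← Finset.add_sum_erase s f ha]; abel)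

lemma ZeroSumFreeOn.subsetSums_erase_eq (hs : ZeroSumFreeOn f s) {a : ι} (ha : a ∈ s)
    (hcard : (subsetSums f s).card ≤ (subsetSums f (s.erase a)).card + 1) :
    subsetSums f (s.erase a) = (subsetSums f s).erase (∑ i ∈ s, f i) := by
  refine Finset.eq_of_subset_of_card_le (Finset.subset_erase.2
    ⟨subsetSums_mono (Finset.erase_subset a s), hs.sum_notMem_subsetSums_erase ha⟩) ?_
  rw [Finset.card_erase_of_mem (sum_mem_subsetSums subset_rfl)]
  omega

lemma add_sub_mem_subsetSums_erase {a b : ι} (ha : a ∈ s) (hb : b ∈ s)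
    (hab : subsetSums f (s.erase a) = subsetSums f (s.erase b)) {x : G}
    (hx : x ∈ subsetSums f (s.erase a)) : x + (f a - f b) ∈ subsetSums f (s.erase a) := by
  have hreflect := sum_sub_mem_subsetSums (hab ▸ sum_sub_mem_subsetSums hx)
  rw [Finset.sum_erase_eq_sub ha, Finset.sum_erase_eq_sub hb, ← hab] at hreflect
  convert hreflect using 1
  abel

lemma ZeroSumFreeOn.eq_of_card_subsetSums_le (hs : ZeroSumFreeOn f s) {a b : ι} (ha : a ∈ s)
    (hb : b ∈ s) (hcarda : (subsetSums f s).card ≤ (subsetSums f (s.erase a)).card + 1)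
    (hcardb : (subsetSums f s).card ≤ (subsetSums f (s.erase b)).card + 1) : f a = f b := by
  by_contra hne
  set σ := ∑ i ∈ s, f i with hσ
  have hDa := hs.subsetSums_erase_eq ha hcarda
  have hDb := hs.subsetSums_erase_eq hb hcardb
  have hab := hDa.trans hDb.symm
  have hshift : σ - f a + (f a - f b) ∈ subsetSums f (s.erase a) := by
    refine add_sub_mem_subsetSums_erase ha hb hab ?_
    rw [hσ, ← Finset.sum_erase_eq_sub ha]
    exact sum_mem_subsetSums subset_rfl
  have hσshift : σ + (f a - f b) ∈ subsetSums f s := by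
    rw [subsetSums_eq_erase_union ha]
    exact Finset.mem_union_right _ (Finset.mem_image.2 ⟨_, hshift, by abel⟩)
  have hσshift' : σ + (f a - f b) ∈ subsetSums f (s.erase b) := by
    rw [hDb]
    exact Finset.mem_erase.2 ⟨by rwa [Ne, add_eq_left, sub_eq_zero], hσshift⟩
  have hback := add_sub_mem_subsetSums_erase hb ha hab.symm hσshift'
  rw [add_assoc, sub_add_sub_cancel, sub_self, add_zero] at hback
  exact hs.sum_notMem_subsetSums_erase hb hback

end AddCommGroup

end SubsequenceSums

section SavchevChen

variable {ι G : Type*} [AddCommGroup G]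

/-- A representation `f i = m i • g` of the terms indexed by `s` with `1`-smooth coefficients `m`.
As `0` is the empty sum, `1`-smoothness says that the subsequence sums of `m` fill `[0, ∑ m i]`.
The condition `∑ m i < addOrderOf g` is left out: it follows from zero-sum freeness. -/
structure SmoothRep (g : G) (m : ι → ℕ) (f : ι → G) (s : Finset ι) : Prop where
  pos : ∀ i ∈ s, 0 < m i
  eq_nsmul : ∀ i ∈ s, f i = m i • g
  subsetSums_eq : subsetSums m s = Finset.Iic (∑ i ∈ s, m i)

variable {f : ι → G} {s : Finset ι} {g : G} {m : ι → ℕ}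

lemma SmoothRep.card_le_sum (h : SmoothRep g m f s) : s.card ≤ ∑ i ∈ s, m i := by
  simpa using Finset.card_nsmul_le_sum s m 1 h.pos

lemma SmoothRep.subsetSums_eq_image [DecidableEq G] (h : SmoothRep g m f s) :
    subsetSums f s = (Finset.Iic (∑ i ∈ s, m i)).image (· • g) := by
  rw [← h.subsetSums_eq, subsetSums_congr h.eq_nsmul]
  exact subsetSums_map (multiplesHom G g) m s

lemma SmoothRep.nsmul_ne_zero (h : SmoothRep g m f s) (hs : ZeroSumFreeOn f s) {k : ℕ}
    (hk : 0 < k) (hkle : k ≤ ∑ i ∈ s, m i) : k • g ≠ 0 := by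
  obtain ⟨t, ht, rfl⟩ := mem_subsetSums.1 (h.subsetSums_eq ▸ Finset.mem_Iic.2 hkle)
  rw [Finset.sum_smul, ← Finset.sum_congr rfl fun i hi => h.eq_nsmul i (ht hi)]
  exact hs t ht (Finset.nonempty_of_sum_ne_zero hk.ne')

lemma SmoothRep.sum_lt_addOrderOf (h : SmoothRep g m f s) (hs : ZeroSumFreeOn f s)
    (hg : IsOfFinAddOrder g) : ∑ i ∈ s, m i < addOrderOf g := by
  by_contra! hle
  exact h.nsmul_ne_zero hs hg.addOrderOf_pos hle (addOrderOf_nsmul_eq_zero g)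

lemma SmoothRep.nsmul_injOn (h : SmoothRep g m f s) (hs : ZeroSumFreeOn f s) :
    Set.InjOn (· • g) (Finset.Iic (∑ i ∈ s, m i) : Set ℕ) := by
  intro i hi j hj hij
  simp only [Finset.coe_Iic, Set.mem_Iic] at hi hj hij
  by_contra hne
  wlog hlt : i < j generalizing i j
  · exact this hij.symm hj hi (Ne.symm hne) (by omega)
  refine h.nsmul_ne_zero hs (k := j - i) (by omega) (by omega) ?_
  rw [sub_nsmul g hlt.le, hij, add_neg_cancel]

lemma SmoothRep.of_erase [DecidableEq ι] {a : ι} {x : ℕ} (h : SmoothRep g m f (s.erase a))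
    (ha : a ∈ s) (hx : 0 < x) (hxle : x ≤ ∑ i ∈ s.erase a, m i) (hfa : f a = x • g) :
    SmoothRep g (Function.update m a x) f s := by
  have hupd : ∀ i ∈ s.erase a, Function.update m a x i = m i := fun i hi =>
    Function.update_of_ne (Finset.ne_of_mem_erase hi) x m
  have hcases : ∀ i ∈ s, i = a ∨ i ∈ s.erase a := fun i hi =>
    (eq_or_ne i a).imp_right fun hia => Finset.mem_erase.2 ⟨hia, hi⟩
  have hsum : ∑ i ∈ s, Function.update m a x i = x + ∑ i ∈ s.erase a, m i := by
    rw [← Finset.add_sum_erase s _ ha, Finset.sum_congr rfl hupd, Function.update_self]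
  refine ⟨fun i hi => ?_, fun i hi => ?_, ?_⟩
  · obtain rfl | hi := hcases i hi
    · rwa [Function.update_self]
    · exact hupd i hi ▸ h.pos i hi
  · obtain rfl | hi := hcases i hi
    · rwa [Function.update_self]
    · exact hupd i hi ▸ h.eq_nsmul i hi
  · rw [subsetSums_eq_erase_union ha, subsetSums_congr hupd, h.subsetSums_eq, hsum,
      Function.update_self]
    ext k
    simp only [Finset.mem_union, Finset.mem_image, Finset.mem_Iic]
    constructor
    · rintro (hk | ⟨j, hj, rfl⟩) <;> omega
    · intro hk
      by_cases hkM : k ≤ ∑ i ∈ s.erase a, m i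
      · exact Or.inl hkM
      · exact Or.inr ⟨k - x, by omega, by omega⟩

lemma SmoothRep.two_mul_card_le [DecidableEq ι] [DecidableEq G] {a : ι}
    (h : SmoothRep g m f (s.erase a)) (hs : ZeroSumFreeOn f s) (ha : a ∈ s)
    (hfa : ∀ x ≤ ∑ i ∈ s.erase a, m i, f a ≠ x • g) :
    2 * s.card ≤ (subsetSums f s).card := by
  have hs' := hs.mono (Finset.erase_subset a s)
  have hdisj : Disjoint (subsetSums f (s.erase a))
      ((subsetSums f (s.erase a)).image (f a + ·)) := by
    rw [Finset.disjoint_right]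
    intro y hy hy'
    obtain ⟨z, hz, rfl⟩ := Finset.mem_image.1 hy
    rw [h.subsetSums_eq_image] at hz hy'
    obtain ⟨k, hk, rfl⟩ := Finset.mem_image.1 hz
    obtain ⟨j, hj, hjk⟩ := Finset.mem_image.1 hy'
    rw [Finset.mem_Iic] at hj hk
    rcases le_total k j with hle | hle
    · exact hfa (j - k) (by omega) (by rw [sub_nsmul g hle, hjk, add_neg_cancel_right])
    · refine hs.add_ne_zero ha (x := (k - j) • g) ?_ ?_
      · rw [h.subsetSums_eq_image]
        exact Finset.mem_image_of_mem _ (Finset.mem_Iic.2 (by omega))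
      · rw [sub_nsmul g hle, ← add_assoc, ← hjk, add_neg_cancel]
  have hcard : (subsetSums f (s.erase a)).card = ∑ i ∈ s.erase a, m i + 1 := by
    rw [h.subsetSums_eq_image, Finset.card_image_of_injOn (h.nsmul_injOn hs'), Nat.card_Iic]
  have hle := h.card_le_sum
  rw [Finset.card_erase_of_mem ha] at hle
  rw [subsetSums_eq_erase_union ha, Finset.card_union_of_disjoint hdisj,
    Finset.card_image_of_injective _ (add_right_injective (f a)), hcard]
  omega

lemma smoothRep_one (h : ∀ i ∈ s, f i = g) : SmoothRep g (fun _ => 1) f s where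
  pos _ _ := one_pos
  eq_nsmul i hi := by rw [h i hi, one_nsmul]
  subsetSums_eq := by
    ext k
    simp only [mem_subsetSums, Finset.sum_const, smul_eq_mul, mul_one, Finset.mem_Iic]
    constructor
    · rintro ⟨t, ht, rfl⟩
      exact Finset.card_le_card ht
    · exact Finset.exists_subset_card_eq

theorem ZeroSumFreeOn.exists_smoothRep [DecidableEq G] (hs : ZeroSumFreeOn f s)
    (hcard : (subsetSums f s).card < 2 * s.card) : ∃ g m, SmoothRep g m f s := by
  classical
  induction s using Finset.strongInduction with
  | H s ih =>
    by_cases hex : ∃ a ∈ s, (subsetSums f (s.erase a)).card < 2 * (s.erase a).card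
    · obtain ⟨a, ha, hlt⟩ := hex
      obtain ⟨g, m, hrep⟩ :=
        ih _ (Finset.erase_ssubset ha) (hs.mono (Finset.erase_subset a s)) hlt
      obtain ⟨x, hxle, hfa⟩ : ∃ x ≤ ∑ i ∈ s.erase a, m i, f a = x • g := by
        by_contra! hfa
        exact hcard.not_ge (hrep.two_mul_card_le hs ha hfa)
      have hx : 0 < x := by
        rw [Nat.pos_iff_ne_zero]
        rintro rfl
        exact hs {a} (Finset.singleton_subset_iff.2 ha) (Finset.singleton_nonempty a)
          (by simpa using hfa)
      exact ⟨g, _, hrep.of_erase ha hx hxle hfa⟩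
    · push Not at hex
      have hle : ∀ a ∈ s, (subsetSums f s).card ≤ (subsetSums f (s.erase a)).card + 1 := by
        intro a ha
        have hlea := hex a ha
        rw [Finset.card_erase_of_mem ha] at hlea
        omega
      obtain ⟨a, ha⟩ : s.Nonempty := Finset.card_pos.1 (by omega)
      exact ⟨f a, _, smoothRep_one fun i hi =>
        hs.eq_of_card_subsetSums_le hi ha (hle i hi) (hle a ha)⟩

end SavchevChen

section SmoothSequences

variable {n ℓ : ℕ}

lemma isOneSmooth_natCast {m : Fin ℓ → ℕ} (hpos : ∀ i, 0 < m i)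
    (hm : subsetSums m Finset.univ = Finset.Iic (∑ i, m i)) :
    IsOneSmooth fun i => (m i : ℤ) := by
  ext x
  simp only [Set.mem_ofPred_eq, Set.mem_Icc]
  constructor
  · rintro ⟨S, hS, rfl⟩
    have hSpos : 0 < ∑ i ∈ S, m i := Finset.sum_pos (fun i _ => hpos i) hS
    have hSle : ∑ i ∈ S, m i ≤ ∑ i, m i := Finset.sum_le_sum_of_subset S.subset_univ
    exact ⟨by exact_mod_cast hSpos, by exact_mod_cast hSle⟩
  · rintro ⟨hx, hxle⟩
    lift x to ℕ using by omega
    obtain ⟨S, -, rfl⟩ :=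
      mem_subsetSums.1 (hm ▸ Finset.mem_Iic.2 (by exact_mod_cast hxle : x ≤ ∑ i, m i))
    refine ⟨S, Finset.nonempty_of_sum_ne_zero (f := m) ?_, (Nat.cast_sum S m).symm⟩
    omega

lemma SmoothRep.isGSmooth {g : ZMod n} {m : Fin ℓ → ℕ} {T : Fin ℓ → ZMod n}
    (h : SmoothRep g m T Finset.univ) (hlt : ∑ i, m i < n) : IsGSmooth g T :=
  ⟨fun i => m i, fun i => Int.natCast_pos.2 (h.pos i (Finset.mem_univ i)),
    fun i => by rw [natCast_zsmul, h.eq_nsmul i (Finset.mem_univ i)],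
    by rwa [← Nat.cast_sum, Nat.cast_lt],
    isOneSmooth_natCast (fun i => h.pos i (Finset.mem_univ i)) h.subsetSums_eq⟩

lemma IsGSmooth.isSignedGSmooth {g : ZMod n} {T : Fin ℓ → ZMod n} (h : IsGSmooth g T) :
    IsSignedGSmooth g T :=
  ⟨fun _ => 1, fun _ => Or.inl rfl, by simpa only [one_smul] using h⟩

theorem ZeroSumFree.exists_isGSmooth [NeZero n] {T : Fin ℓ → ZMod n} (hT : ZeroSumFree T)
    (hℓ : n < 2 * ℓ) : ∃ g : ZMod n, addOrderOf g = n ∧ IsGSmooth g T := by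
  have hT' : ZeroSumFreeOn T Finset.univ := fun t _ => hT t
  have hcard : (subsetSums T Finset.univ).card < 2 * (Finset.univ : Finset (Fin ℓ)).card := by
    rw [Finset.card_fin]
    exact (Finset.card_le_univ _).trans_lt (by rwa [ZMod.card])
  obtain ⟨g, m, hrep⟩ := hT'.exists_smoothRep hcard
  have hlt := hrep.sum_lt_addOrderOf hT' (isOfFinAddOrder_of_finite g)
  have hle := hrep.card_le_sum
  rw [Finset.card_fin] at hle
  have hdvd : addOrderOf g ∣ n := by simpa only [ZMod.card] using addOrderOf_dvd_card (x := g)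
  have horder : addOrderOf g = n :=
    (Nat.eq_of_dvd_of_lt_two_mul (NeZero.ne n) hdvd (by omega)).symm
  exact ⟨g, horder, hrep.isGSmooth (horder ▸ hlt)⟩

end SmoothSequences

section ExtremalSequence

/-- The congruence `x ≡ ± m y` modulo `n`. -/
def SignedModEq (n m y x : ℤ) : Prop := n ∣ m * y - x ∨ n ∣ m * y + x

lemma signedModEq_neg_left {n m y x : ℤ} : SignedModEq n m (-y) x ↔ SignedModEq n m y x := by
  rw [SignedModEq, SignedModEq, ← dvd_neg (b := m * -y - x), ← dvd_neg (b := m * -y + x), or_comm]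
  ring_nf

lemma signedModEq_neg_right {n m y x : ℤ} : SignedModEq n m y (-x) ↔ SignedModEq n m y x := by
  rw [SignedModEq, SignedModEq, sub_neg_eq_add, ← sub_eq_add_neg, or_comm]

lemma IsOneSmooth.exists_eq_one {ℓ : ℕ} [NeZero ℓ] {m : Fin ℓ → ℤ} (hm : IsOneSmooth m)
    (hpos : ∀ i, 1 ≤ m i) : ∃ j, m j = 1 := by
  have hnonneg : ∀ i, 0 ≤ m i := fun i => zero_le_one.trans (hpos i)
  have hone : (1 : ℤ) ∈ Set.Icc 1 (∑ i, m i) :=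
    ⟨le_rfl, (hpos 0).trans (Finset.single_le_sum (fun i _ => hnonneg i) (Finset.mem_univ 0))⟩
  obtain ⟨S, ⟨j, hj⟩, hS⟩ := hm.superset hone
  exact ⟨j, ((Finset.single_le_sum (fun i _ => hnonneg i) hj).trans_eq hS).antisymm (hpos j)⟩

lemma IsSignedGSmooth.exists_signedModEq {n ℓ : ℕ} [NeZero ℓ] {g : ZMod n} {t : Fin ℓ → ℤ}
    (h : IsSignedGSmooth g fun i => (t i : ZMod n)) :
    ∃ m : Fin ℓ → ℤ, (∀ i, 1 ≤ m i) ∧ ∑ i, m i < n ∧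
      ∃ j, ∀ i, SignedModEq n (m i) (t j) (t i) := by
  obtain ⟨ε, hε, m, hpos, hT, hlt, hsmooth⟩ := h
  obtain ⟨j, hj⟩ := hsmooth.exists_eq_one hpos
  refine ⟨m, hpos, hlt, j, fun i => ?_⟩
  have hTi := hT i
  have hTj := hT j
  rw [hj, one_smul] at hTj
  rw [← hTj] at hTi
  simp only [SignedModEq, ← ZMod.intCast_zmod_eq_zero_iff_dvd, Int.cast_sub, Int.cast_add,
    Int.cast_mul]
  rcases hε i with hi | hi <;> rcases hε j with hj | hj <;>
    simp only [hi, hj, zsmul_eq_mul, Int.cast_one, Int.cast_neg, one_mul, neg_mul, mul_neg,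
      neg_inj] at hTi
  · exact Or.inl (sub_eq_zero.2 hTi.symm)
  · exact Or.inr (by rw [hTi, add_neg_cancel])
  · exact Or.inr (by rw [← hTi, neg_add_cancel])
  · exact Or.inl (sub_eq_zero.2 hTi.symm)

lemma eq_zero_or_eq_self_of_dvd {n c : ℤ} (h : n ∣ c) (hlo : -n < c) (hhi : c < 2 * n) :
    c = 0 ∨ c = n := by
  obtain ⟨d, rfl⟩ := h
  have hdlo : -1 < d := by nlinarith
  have hdhi : d < 2 := by nlinarith
  interval_cases d <;> simp

namespace SignedModEq

variable {n k m y x : ℤ}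

lemma mul_eq_or (h : SignedModEq n m y x) (hx : 0 < x) (hlo : x < m * y + n)
    (hhi : m * y + x < 2 * n) : m * y = x ∨ m * y = n + x ∨ m * y + x = 0 ∨ m * y + x = n := by
  rcases h with h | h <;> have := eq_zero_or_eq_self_of_dvd h (by omega) (by omega) <;> omega

lemma le_of_one (h : SignedModEq n m 1 x) (hm : 1 ≤ m) (hx : 2 * x ≤ n) : x ≤ m := by
  by_contra! hlt
  have := h.mul_eq_or (by omega) (by omega) (by omega)
  omega

variable (hn : n = 2 * k ∧ 3 ≤ k ∨ n = 2 * k + 1 ∧ 4 ≤ k) (hm : 1 ≤ m)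
include hn hm

lemma two_le_of_self_one (h : SignedModEq n m k 1) : 2 ≤ m := by
  by_contra! hlt
  interval_cases m
  have := h.mul_eq_or (by omega) (by omega) (by omega)
  omega

lemma three_le_of_self_pred (h : SignedModEq n m k (k - 1)) : 3 ≤ m := by
  by_contra! hlt
  interval_cases m <;>
    have := h.mul_eq_or (by omega) (by omega) (by omega) <;>
    omega

lemma three_le_of_pred_one (h : SignedModEq n m (k - 1) 1) : 3 ≤ m := by
  by_contra! hlt
  interval_cases m <;>
    have := h.mul_eq_or (by omega) (by omega) (by omega) <;>
    omega

lemma four_le_of_pred_self (h : SignedModEq n m (k - 1) k) : 4 ≤ m := by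
  by_contra! hlt
  interval_cases m <;>
    have := h.mul_eq_or (by omega) (by omega) (by omega) <;>
    omega

end SignedModEq

/-- The sequence `(k, -(k - 1), -(k - 1), 1, …, 1)` of length `k = l + 3`. Its reduction modulo
`2 * k` or `2 * k + 1` is zero-sum free but, apart from modulus `7`, not signed smooth. -/
def extremalSeq (l : ℕ) : Fin (l + 3) → ℤ :=
  Fin.cons (l + 3) (Fin.cons (-(l + 3 - 1)) (Fin.cons (-(l + 3 - 1)) fun _ => 1))

lemma extremalSeq_eq_or (l : ℕ) (i : Fin (l + 3)) :
    extremalSeq l i = l + 3 ∨ extremalSeq l i = -(l + 3 - 1) ∨ extremalSeq l i = 1 := by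
  refine Fin.cases (Or.inl rfl) (fun i => ?_) i
  refine Fin.cases (Or.inr (Or.inl rfl)) (fun i => ?_) i
  exact Fin.cases (Or.inr (Or.inl rfl)) (fun _ => Or.inr (Or.inr rfl)) i

lemma sum_fin_add_three {M : Type*} [AddCommMonoid M] {l : ℕ} (f : Fin (l + 3) → M) :
    ∑ i, f i = f 0 + f 1 + f 2 + ∑ i : Fin l, f i.succ.succ.succ := by
  simp only [Fin.sum_univ_succ, add_assoc]
  rfl

lemma exists_sum_extremalSeq_eq {l : ℕ} (S : Finset (Fin (l + 3))) :
    ∃ a b c : ℕ, a ≤ 1 ∧ b ≤ 2 ∧ c ≤ l ∧ a + b + c = S.card ∧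
      ∑ i ∈ S, extremalSeq l i = a * (l + 3) - b * (l + 3 - 1) + c := by
  refine ⟨if 0 ∈ S then 1 else 0, (if 1 ∈ S then 1 else 0) + if 2 ∈ S then 1 else 0,
    (Finset.univ.filter fun i : Fin l => i.succ.succ.succ ∈ S).card, ?_, ?_, ?_, ?_, ?_⟩
  · split_ifs <;> omega
  · split_ifs <;> omega
  · simpa only [Finset.card_fin] using Finset.card_filter_le (Finset.univ : Finset (Fin l)) _
  · rw [Finset.card_eq_sum_ones S, ← Fintype.sum_ite_mem, sum_fin_add_three, Finset.card_filter]
    omega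
  · have htail (i : Fin l) : extremalSeq l i.succ.succ.succ = 1 := rfl
    rw [← Fintype.sum_ite_mem, sum_fin_add_three, Finset.card_filter,
      show extremalSeq l 0 = l + 3 from rfl, show extremalSeq l 1 = -(l + 3 - 1) from rfl,
      show extremalSeq l 2 = -(l + 3 - 1) from rfl]
    simp only [htail]
    push_cast
    split_ifs <;> ring

lemma zeroSumFree_extremalSeq {n l : ℕ} (hn : 2 * l + 5 ≤ n) :
    ZeroSumFree fun i => (extremalSeq l i : ZMod n) := by
  intro S hS hzero
  obtain ⟨a, b, c, ha, hb, hc, habc, hsum⟩ := exists_sum_extremalSeq_eq S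
  have hcard := hS.card_pos
  rw [← Int.cast_sum, ZMod.intCast_zmod_eq_zero_iff_dvd, hsum] at hzero
  have hsmall : |(a * (l + 3) - b * (l + 3 - 1) + c : ℤ)| < n := by
    rw [abs_lt]
    interval_cases a <;> interval_cases b <;> omega
  have := Int.eq_zero_of_abs_lt_dvd hzero hsmall
  interval_cases a <;> interval_cases b <;> omega

lemma le_sum_fin_add_three {l : ℕ} {m : Fin (l + 3) → ℤ} {a b c : ℤ} (h0 : a ≤ m 0)
    (h1 : b ≤ m 1) (h2 : b ≤ m 2) (htail : ∀ i : Fin l, c ≤ m i.succ.succ.succ) :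
    a + 2 * b + l * c ≤ ∑ i, m i := by
  have hle := Finset.card_nsmul_le_sum Finset.univ (fun i : Fin l => m i.succ.succ.succ) c
    fun i _ => htail i
  rw [Finset.card_fin, nsmul_eq_mul] at hle
  rw [sum_fin_add_three]
  linarith

lemma not_isSignedGSmooth_extremalSeq {n l : ℕ}
    (hn : n = 2 * (l + 3) ∨ n = 2 * (l + 3) + 1 ∧ 1 ≤ l) (g : ZMod n) :
    ¬ IsSignedGSmooth g fun i => (extremalSeq l i : ZMod n) := by
  intro h
  obtain ⟨m, hpos, hlt, j, hj⟩ := h.exists_signedModEq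
  have hn' : (n : ℤ) = 2 * (l + 3) ∧ (3 : ℤ) ≤ l + 3 ∨
      (n : ℤ) = 2 * (l + 3) + 1 ∧ (4 : ℤ) ≤ l + 3 := by omega
  have h0 : SignedModEq n (m 0) (extremalSeq l j) (l + 3) := hj 0
  have h1 : SignedModEq n (m 1) (extremalSeq l j) (l + 3 - 1) := signedModEq_neg_right.1 (hj 1)
  have h2 : SignedModEq n (m 2) (extremalSeq l j) (l + 3 - 1) := signedModEq_neg_right.1 (hj 2)
  have htail (i : Fin l) : SignedModEq n (m i.succ.succ.succ) (extremalSeq l j) 1 :=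
    hj i.succ.succ.succ
  rcases extremalSeq_eq_or l j with hy | hy | hy <;>
    simp only [hy, signedModEq_neg_left] at h0 h1 h2 htail
  · have := le_sum_fin_add_three (hpos 0) (h1.three_le_of_self_pred hn' (hpos 1))
      (h2.three_le_of_self_pred hn' (hpos 2))
      fun i => (htail i).two_le_of_self_one hn' (hpos _)
    omega
  · have := le_sum_fin_add_three (h0.four_le_of_pred_self hn' (hpos 0)) (hpos 1) (hpos 2)
      fun i => (htail i).three_le_of_pred_one hn' (hpos _)
    omega
  · have := le_sum_fin_add_three (h0.le_of_one (hpos 0) (by omega))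
      (h1.le_of_one (hpos 1) (by omega)) (h2.le_of_one (hpos 2) (by omega)) fun i => hpos _
    omega

end ExtremalSequence

theorem stmt12 (n : ℕ) (hn : n = 6 ∨ 8 ≤ n) :
    (∀ (ℓ : ℕ) (T : Fin ℓ → ZMod n), n / 2 + 1 ≤ ℓ → ZeroSumFree T →
      ∃ g : ZMod n, addOrderOf g = n ∧ IsSignedGSmooth g T) ∧
    (∃ T : Fin (n / 2) → ZMod n, ZeroSumFree T ∧
      ∀ g : ZMod n, addOrderOf g = n → ¬ IsSignedGSmooth g T) := by
  constructor
  · intro ℓ T hℓ hT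
    have : NeZero n := ⟨by omega⟩
    obtain ⟨g, hg, hsmooth⟩ := hT.exists_isGSmooth (by omega)
    exact ⟨g, hg, hsmooth.isSignedGSmooth⟩
  · obtain ⟨l, hl⟩ : ∃ l, n / 2 = l + 3 := ⟨n / 2 - 3, by omega⟩
    rw [hl]
    exact ⟨_, zeroSumFree_extremalSeq (l := l) (by omega), fun g _ =>
      not_isSignedGSmooth_extremalSeq (by omega) g⟩
end
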